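/- Let (pₕ)ₕ be a sequence in L^{r'}(Ω) with zero mean, p ∈ L^{r'}(Ω) with zero mean, r' ∈ (1,∞), and suppose (i) ‖pₕ‖_{L^{r'}} is bounded uniformly, and (ii) ∫_Ω (|pₕ|^{r'−2} pₕ − |p|^{r'−2} p)(pₕ − p) → 0. Then pₕ → p strongly in L^{r'}(Ω). -/

import Mathlib

open Real MeasureTheory Filter

lemma psc_phi_eq (ρ : ℝ) (hρ : 1 < ρ) (t : ℝ) :
    |t| ^ (ρ - 2) * t = (max t 0) ^ (ρ - 1) - (max (-t) 0) ^ (ρ - 1) := by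
  have h0 : (0:ℝ) ^ (ρ - 1) = 0 := Real.zero_rpow (by linarith)
  have key : ∀ s : ℝ, 0 < s → s ^ (ρ - 2) * s = s ^ (ρ - 1) := by
    intro s hs
    rw [← Real.rpow_add_one hs.ne']
    congr 1; ring
  rcases lt_trichotomy t 0 with h | h | h
  · rw [max_eq_right h.le, max_eq_left (by linarith), h0, abs_of_neg h, ← key (-t) (by linarith)]
    ring
  · subst h; simp
  · rw [max_eq_left h.le, max_eq_right (by linarith), h0, abs_of_pos h, key t h]
    ring

lemma psc_phi_cont (ρ : ℝ) (hρ : 1 < ρ) : Continuous (fun t : ℝ => |t| ^ (ρ - 2) * t) := by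
  have : (fun t : ℝ => |t| ^ (ρ - 2) * t)
      = fun t => (max t 0) ^ (ρ - 1) - (max (-t) 0) ^ (ρ - 1) := funext (psc_phi_eq ρ hρ)
  rw [this]
  have h : 0 ≤ ρ - 1 := by linarith
  exact ((continuous_id.max continuous_const).rpow_const (fun _ => Or.inr h)).sub
    ((continuous_neg.max continuous_const).rpow_const (fun _ => Or.inr h))

lemma psc_phi_strictMono (ρ : ℝ) (hρ : 1 < ρ) : StrictMono (fun t : ℝ => |t| ^ (ρ - 2) * t) := by
  intro a b hab
  have h : 0 < ρ - 1 := by linarith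
  simp only [psc_phi_eq ρ hρ]
  have h1 : (max a 0) ^ (ρ - 1) ≤ (max b 0) ^ (ρ - 1) :=
    Real.rpow_le_rpow (le_max_right _ _) (max_le_max hab.le le_rfl) h.le
  have h2 : (max (-b) 0) ^ (ρ - 1) ≤ (max (-a) 0) ^ (ρ - 1) :=
    Real.rpow_le_rpow (le_max_right _ _) (max_le_max (by linarith) le_rfl) h.le
  rcases lt_or_ge 0 b with hb | hb
  · have : (max a 0) ^ (ρ - 1) < (max b 0) ^ (ρ - 1) :=
      Real.rpow_lt_rpow (le_max_right _ _)
        (by rw [max_eq_left hb.le]; exact max_lt hab hb) h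
    linarith
  · have : (max (-b) 0) ^ (ρ - 1) < (max (-a) 0) ^ (ρ - 1) :=
      Real.rpow_lt_rpow (le_max_right _ _)
        (by rw [max_eq_left (a := -a) (by linarith)]; exact max_lt (by linarith) (by linarith)) h
    linarith

/-- the monotonicity integrand -/
noncomputable def pscG (ρ : ℝ) (a b : ℝ) : ℝ := (|a| ^ (ρ - 2) * a - |b| ^ (ρ - 2) * b) * (a - b)

lemma pscG_cont (ρ : ℝ) (hρ : 1 < ρ) : Continuous (fun z : ℝ × ℝ => pscG ρ z.1 z.2) := by
  have h := psc_phi_cont ρ hρ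
  exact ((h.comp continuous_fst).sub (h.comp continuous_snd)).mul
    (continuous_fst.sub continuous_snd)

lemma pscG_pos (ρ : ℝ) (hρ : 1 < ρ) {a b : ℝ} (hab : a ≠ b) : 0 < pscG ρ a b := by
  rcases lt_or_gt_of_ne hab with h | h
  · have := psc_phi_strictMono ρ hρ h
    simp only at this
    exact mul_pos_of_neg_of_neg (by linarith) (by linarith)
  · have := psc_phi_strictMono ρ hρ h
    simp only at this
    exact mul_pos (by linarith) (by linarith)

lemma pscG_nonneg (ρ : ℝ) (hρ : 1 < ρ) (a b : ℝ) : 0 ≤ pscG ρ a b := by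
  by_cases h : a = b
  · simp [pscG, h]
  · exact (pscG_pos ρ hρ h).le

lemma pscG_hom (ρ : ℝ) {t : ℝ} (ht : 0 < t) (a b : ℝ) :
    pscG ρ (t * a) (t * b) = t ^ ρ * pscG ρ a b := by
  have : t ^ ρ = t ^ (ρ - 2) * t * t := by
    rw [← Real.rpow_add_one ht.ne', ← Real.rpow_add_one ht.ne']; congr 1; ring
  unfold pscG
  rw [abs_mul, abs_mul, abs_of_pos ht, Real.mul_rpow ht.le (abs_nonneg _),
    Real.mul_rpow ht.le (abs_nonneg _), this]
  ring

lemma psc_sphere {ρ : ℝ} (hρ : 1 < ρ) {a b : ℝ} (h : ‖((a, b) : ℝ × ℝ)‖ = 1) :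
    1 ≤ |a| ^ ρ + |b| ^ ρ := by
  have ha : 0 ≤ |a| ^ ρ := by positivity
  have hb : 0 ≤ |b| ^ ρ := by positivity
  rw [Prod.norm_def] at h
  simp only [Real.norm_eq_abs] at h
  rcases max_choice |a| |b| with h' | h' <;> rw [h'] at h
  · rw [h, Real.one_rpow]; linarith
  · rw [h, Real.one_rpow]; linarith

/-- reduce to the unit sphere by homogeneity -/
lemma psc_scale (ρ : ℝ) (hρ : 1 < ρ) (A B C : ℝ)
    (H : ∀ a b : ℝ, ‖((a, b) : ℝ × ℝ)‖ = 1 →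
      A * |a - b| ^ ρ ≤ B * (|a| ^ ρ + |b| ^ ρ) + C * pscG ρ a b) (a b : ℝ) :
    A * |a - b| ^ ρ ≤ B * (|a| ^ ρ + |b| ^ ρ) + C * pscG ρ a b := by
  by_cases h : ((a, b) : ℝ × ℝ) = 0
  · simp only [Prod.mk_eq_zero] at h
    obtain ⟨rfl, rfl⟩ := h
    simp [pscG, Real.zero_rpow (show ρ ≠ 0 by linarith)]
  set t := ‖((a, b) : ℝ × ℝ)‖ with ht
  have htp : 0 < t := norm_pos_iff.2 h
  have h1 : ‖((t⁻¹ * a, t⁻¹ * b) : ℝ × ℝ)‖ = 1 := by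
    have : ((t⁻¹ * a, t⁻¹ * b) : ℝ × ℝ) = t⁻¹ • ((a, b) : ℝ × ℝ) := rfl
    rw [this, norm_smul, ← ht, Real.norm_eq_abs, abs_of_pos (inv_pos.2 htp),
      inv_mul_cancel₀ htp.ne']
  have h2 := H _ _ h1
  have hi : 0 < t⁻¹ := inv_pos.2 htp
  rw [pscG_hom ρ hi, ← mul_sub, abs_mul, abs_mul, abs_mul, abs_of_pos hi,
    Real.mul_rpow hi.le (abs_nonneg _), Real.mul_rpow hi.le (abs_nonneg _),
    Real.mul_rpow hi.le (abs_nonneg _)] at h2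
  have hq : 0 < t⁻¹ ^ ρ := Real.rpow_pos_of_pos hi _
  refine le_of_mul_le_mul_left ?_ hq
  linarith

lemma psc_pointwise (ρ : ℝ) (hρ : 1 < ρ) (ε : ℝ) (hε : 0 < ε) :
    ∃ K : ℝ, 0 ≤ K ∧ ∀ a b : ℝ,
      |a - b| ^ ρ ≤ ε * (|a| ^ ρ + |b| ^ ρ) + K * pscG ρ a b := by
  have hc : Continuous (fun z : ℝ × ℝ => |z.1 - z.2| ^ ρ) :=
    (continuous_fst.sub continuous_snd).abs.rpow_const (fun _ => Or.inr (by linarith))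
  have hK : IsCompact (Metric.sphere (0 : ℝ × ℝ) 1 ∩ {z | ε ≤ |z.1 - z.2| ^ ρ}) :=
    (isCompact_sphere _ _).inter_right (isClosed_le continuous_const hc)
  have hpos : ∀ z ∈ Metric.sphere (0 : ℝ × ℝ) 1 ∩ {z | ε ≤ |z.1 - z.2| ^ ρ},
      0 < pscG ρ z.1 z.2 := by
    rintro ⟨a, b⟩ ⟨_, hz⟩
    refine pscG_pos ρ hρ ?_
    rintro h
    simp only at h
    subst h
    simp [Real.zero_rpow (show ρ ≠ 0 by linarith)] at hz
    linarith
  obtain ⟨m, hm, hmin⟩ := hK.exists_forall_le' (pscG_cont ρ hρ).continuousOn hpos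
  refine ⟨2 ^ ρ / m, by positivity, fun a b => ?_⟩
  have := psc_scale ρ hρ 1 ε (2 ^ ρ / m) ?_ a b
  · simpa using this
  intro a b hab
  have hg := pscG_nonneg ρ hρ a b
  have hs := psc_sphere hρ hab
  rw [one_mul]
  by_cases h : ε ≤ |a - b| ^ ρ
  · have h1 := hmin (a, b) ⟨by simpa using hab, h⟩
    simp only at h1
    have ha : |a| ≤ 1 := by rw [← hab]; exact norm_fst_le ((a, b) : ℝ × ℝ)
    have hb : |b| ≤ 1 := by rw [← hab]; exact norm_snd_le ((a, b) : ℝ × ℝ)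
    have h2 : |a - b| ^ ρ ≤ 2 ^ ρ :=
      Real.rpow_le_rpow (abs_nonneg _) (by linarith [abs_sub a b]) (by linarith)
    have h3 : 2 ^ ρ ≤ 2 ^ ρ / m * pscG ρ a b := by
      rw [div_mul_eq_mul_div, le_div_iff₀ hm]
      gcongr
    have : 0 ≤ ε * (|a| ^ ρ + |b| ^ ρ) := by positivity
    linarith
  · have : 0 ≤ 2 ^ ρ / m * pscG ρ a b := by positivity
    nlinarith

lemma psc_bound (ρ : ℝ) (hρ : 1 < ρ) :
    ∃ K : ℝ, ∀ a b : ℝ, pscG ρ a b ≤ K * (|a| ^ ρ + |b| ^ ρ) := by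
  obtain ⟨M, hM⟩ := ((isCompact_sphere (0 : ℝ × ℝ) 1).image (pscG_cont ρ hρ)).bddAbove
  refine ⟨max M 0, fun a b => ?_⟩
  have := psc_scale ρ hρ 0 (max M 0) (-1) ?_ a b
  · linarith
  intro a b hab
  have h1 : pscG ρ a b ≤ M := hM ⟨(a, b), by simpa using hab, rfl⟩
  have hs := psc_sphere hρ hab
  have := le_max_left M 0
  have := le_max_right M 0
  nlinarith

lemma psc_norm {α : Type*} [MeasurableSpace α] {μ : Measure α} (ρ : ℝ) (hρ : 1 < ρ)
    (f : Lp ℝ (ENNReal.ofReal ρ) μ) : ‖f‖ ^ ρ = ∫ x, |f x| ^ ρ ∂μ := by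
  have h0 : ENNReal.ofReal ρ ≠ 0 := by simp; linarith
  have hn : (0:ℝ) ≤ ∫ x, |f x| ^ ρ ∂μ := integral_nonneg fun x => by positivity
  rw [Lp.norm_def, (Lp.memLp f).eLpNorm_eq_integral_rpow_norm h0 ENNReal.ofReal_ne_top,
    ENNReal.toReal_ofReal (by positivity), ENNReal.toReal_ofReal (by linarith)]
  simp only [Real.norm_eq_abs]
  rw [← Real.rpow_mul hn, inv_mul_cancel₀ (by linarith), Real.rpow_one]

lemma psc_int {α : Type*} [MeasurableSpace α] {μ : Measure α} (ρ : ℝ) (hρ : 1 < ρ)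
    (f : Lp ℝ (ENNReal.ofReal ρ) μ) : Integrable (fun x => |f x| ^ ρ) μ := by
  have h0 : ENNReal.ofReal ρ ≠ 0 := by simp; linarith
  have := (Lp.memLp f).integrable_norm_rpow h0 ENNReal.ofReal_ne_top
  rwa [ENNReal.toReal_ofReal (by linarith)] at this

lemma psc_intG {α : Type*} [MeasurableSpace α] {μ : Measure α} (ρ : ℝ) (hρ : 1 < ρ)
    (f g : Lp ℝ (ENNReal.ofReal ρ) μ) : Integrable (fun x => pscG ρ (f x) (g x)) μ := by
  obtain ⟨K, hK⟩ := psc_bound ρ hρ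
  refine (((psc_int ρ hρ f).add (psc_int ρ hρ g)).const_mul K).mono' ?_ ?_
  · have h : AEStronglyMeasurable (fun x => ((f x, g x) : ℝ × ℝ)) μ :=
      (Lp.aestronglyMeasurable f).prodMk (Lp.aestronglyMeasurable g)
    have h' := (pscG_cont ρ hρ).comp_aestronglyMeasurable h
    exact h'
  · refine Eventually.of_forall fun x => ?_
    rw [Real.norm_eq_abs, abs_of_nonneg (pscG_nonneg ρ hρ _ _)]
    exact hK _ _

lemma psc_est {α : Type*} [MeasurableSpace α] {μ : Measure α} (ρ : ℝ) (hρ : 1 < ρ)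
    (ε K : ℝ) (hK : ∀ a b : ℝ, |a - b| ^ ρ ≤ ε * (|a| ^ ρ + |b| ^ ρ) + K * pscG ρ a b)
    (f g : Lp ℝ (ENNReal.ofReal ρ) μ) :
    ‖f - g‖ ^ ρ ≤ ε * (‖f‖ ^ ρ + ‖g‖ ^ ρ) + K * ∫ x, pscG ρ (f x) (g x) ∂μ := by
  have hf := psc_int ρ hρ f
  have hg := psc_int ρ hρ g
  have hG := psc_intG ρ hρ f g
  have hfg : Integrable (fun x => ε * (|f x| ^ ρ + |g x| ^ ρ)) μ := (hf.add hg).const_mul ε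
  rw [psc_norm ρ hρ, psc_norm ρ hρ f, psc_norm ρ hρ g, ← integral_add hf hg,
    ← integral_const_mul, ← integral_const_mul,
    ← integral_add hfg (hG.const_mul K)]
  refine integral_mono_ae (psc_int ρ hρ _) (hfg.add (hG.const_mul K)) ?_
  filter_upwards [Lp.coeFn_sub f g] with x hx
  rw [hx]
  exact hK _ _



/-- Step 4 of the convergence proof: a bounded sequence `(pₕ)` in `L^{r'}(Ω)` with
zero mean converging to a zero-mean `p` in the sense that
`∫ (|pₕ|^{r'−2} pₕ − |p|^{r'−2} p)(pₕ − p) → 0` converges strongly in `L^{r'}(Ω)`. -/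
theorem pressure_strong_convergence
    (d : ℕ) (Ω : Set (EuclideanSpace ℝ (Fin d))) (ρ : ℝ) (hρ : 1 < ρ)
    (P : ℕ → Lp ℝ (ENNReal.ofReal ρ) (volume.restrict Ω))
    (p : Lp ℝ (ENNReal.ofReal ρ) (volume.restrict Ω))
    (hmean : ∀ n, ∫ x, (P n : EuclideanSpace ℝ (Fin d) → ℝ) x ∂(volume.restrict Ω) = 0)
    (hmeanp : ∫ x, (p : EuclideanSpace ℝ (Fin d) → ℝ) x ∂(volume.restrict Ω) = 0)
    (hbd : ∃ C : ℝ, ∀ n, ‖P n‖ ≤ C)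
    (hconv : Tendsto (fun n => ∫ x,
        (|(P n : EuclideanSpace ℝ (Fin d) → ℝ) x| ^ (ρ - 2) *
            (P n : EuclideanSpace ℝ (Fin d) → ℝ) x -
          |(p : EuclideanSpace ℝ (Fin d) → ℝ) x| ^ (ρ - 2) *
            (p : EuclideanSpace ℝ (Fin d) → ℝ) x) *
          ((P n : EuclideanSpace ℝ (Fin d) → ℝ) x -
            (p : EuclideanSpace ℝ (Fin d) → ℝ) x) ∂(volume.restrict Ω))
      atTop (nhds 0)) :
    Tendsto (fun n => ‖P n - p‖) atTop (nhds 0) := by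

  haveI : Fact (1 ≤ ENNReal.ofReal ρ) := ⟨by simpa using hρ.le⟩
  obtain ⟨C, hC⟩ := hbd
  have hC0 : 0 ≤ C := (norm_nonneg _).trans (hC 0)
  have hpow : Tendsto (fun n => ‖P n - p‖ ^ ρ) atTop (nhds 0) := by
    rw [Metric.tendsto_atTop]
    intro δ hδ
    set M := C ^ ρ + ‖p‖ ^ ρ + 1 with hM
    have hMp : 0 < M := by positivity
    obtain ⟨K, hK0, hK⟩ := psc_pointwise ρ hρ (δ / (2 * M)) (by positivity)
    have hlim := hconv.const_mul K
    rw [mul_zero] at hlim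
    obtain ⟨N, hN⟩ := eventually_atTop.1 (hlim.eventually (gt_mem_nhds (half_pos hδ)))
    refine ⟨N, fun n hn => ?_⟩
    have h1 := hN n hn
    have h2 := psc_est ρ hρ _ K hK (P n) p
    have h3 : ‖P n‖ ^ ρ ≤ C ^ ρ :=
      Real.rpow_le_rpow (norm_nonneg _) (hC n) (by linarith)
    have h4 : δ / (2 * M) * (‖P n‖ ^ ρ + ‖p‖ ^ ρ) ≤ δ / (2 * M) * M := by
      gcongr
      linarith
    have h5 : δ / (2 * M) * M = δ / 2 := by field_simp
    have h6 : 0 ≤ ‖P n - p‖ ^ ρ := Real.rpow_nonneg (norm_nonneg _) _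
    simp only [pscG] at h2
    rw [Real.dist_eq, sub_zero, abs_of_nonneg h6]
    linarith
  have := hpow.rpow_const (p := ρ⁻¹) (Or.inr (by positivity))
  rw [Real.zero_rpow (by positivity)] at this
  refine this.congr fun n => ?_
  exact Real.rpow_rpow_inv (norm_nonneg _) (by linarith)
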